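/- For every $n\ge1$ and real $t$: $\mathrm{Im}\big(A_n\overline{B_n}\big)=\sum_{r=0}^{n-1} t^{2r+1}N_r(n)$, where $N_r(n)=\sum_{1\le k\le l\le n}R_1^k\,2^{(k,l)}\,\rho_l\,\theta^lK_r(n-l)$, with $2^{(k,l)}=2$ if $k\ne l$ and $1$ if $k=l$. -/

import Mathlib

open scoped Classical

/-- `ρ 0 = 1`, `ρ n = a 1 ⋯ a n`. -/
noncomputable def rho (a : ℕ → ℝ) (n : ℕ) : ℝ := ∏ k ∈ Finset.Icc 1 n, a k

/-- `R_k^l = ∑_{s=k}^l η s · ρ l / ρ s`. -/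
noncomputable def Rkl (a η : ℕ → ℝ) (k l : ℕ) : ℝ :=
  ∑ s ∈ Finset.Icc k l, η s * (rho a l / rho a s)

/-- `T_k^l = (R_k^l)² ρ (k-1) / ρ l`. -/
noncomputable def Tkl (a η : ℕ → ℝ) (k l : ℕ) : ℝ :=
  (Rkl a η k l) ^ 2 * (rho a (k - 1) / rho a l)

/-- `Δ_r^n = ∑_{1 ≤ k₁ < ⋯ < k_r ≤ n} R_1^{k₁} R_{k₁+1}^{k₂} ⋯ R_{k_{r-1}+1}^{k_r}`
(`Δ_0^n = 1`, and `Δ_r^n = 0` for `r > n`). -/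
noncomputable def Delta (a η : ℕ → ℝ) (r n : ℕ) : ℝ :=
  ∑ k ∈ (Fintype.piFinset fun _ : Fin r => Finset.Icc 1 n).filter
      (fun k => ∀ i j : Fin r, i < j → k i < k j),
    ∏ i : Fin r, Rkl a η (if (i : ℕ) = 0 then 1 else k ⟨(i : ℕ) - 1, Nat.lt_of_le_of_lt (Nat.sub_le _ _) i.isLt⟩ + 1) (k i)

/-- `K_r(n) = ∑_{p=-r}^r (-1)^p Δ_{r+p}^n Δ_{r-p}^n`. -/
noncomputable def Kr (a η : ℕ → ℝ) (r n : ℕ) : ℝ :=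
  ∑ p ∈ Finset.Icc (-(r : ℤ)) (r : ℤ),
    (-1 : ℝ) ^ p * Delta a η ((r : ℤ) + p).toNat n * Delta a η ((r : ℤ) - p).toNat n

/-- Shift of the data: `θ^j` replaces `(a k, η k)` by `(a (k+j), η (k+j))`. -/
def shift (f : ℕ → ℝ) (j : ℕ) : ℕ → ℝ := fun k => f (k + j)

open Finset

/-!
Fix `n` and let `y_l = θ^l B_{n-l}` for `l ≤ n`, `y_{n+1} = 0`. Then `y` solves the adjoint
recurrence `y_l = (b_{l+1} - i t η_{l+1}) y_{l+1} - a_{l+2} y_{l+2}`, and constancy of Casoratians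
gives `B_n = y_0` and `A_n = a_1 y_1`. The differences `x_l = y_l - a_{l+1} y_{l+1}` satisfy
`x_l = x_{l+1} - i t η_{l+1} y_{l+1}`, from which three facts follow by telescoping:

* `x_l = 1 - i t ∑_{k > l} R_{l+1}^k x_k`; the generating polynomial of the `θ^l Δ_r^{n-l}`,
  evaluated at `-i t`, solves the same triangular system, so `|x_l|² = ∑_r t^{2r} θ^l K_r(n-l)`;
* `ρ_l Re (x_l conj y_l) = ∑_{k ≥ l} ρ_k |x_k|²`;
* `Im (A_n conj B_n) = ρ_1 Im (y_1 conj x_0) = t ∑_{s ≥ 1} η_s ρ_s |y_s|²`.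

Summation by parts in the last sum, with `|y_s|² - |y_s - x_s|² = 2 Re (x_s conj y_s) - |x_s|²`,
turns it into `t ∑_s R_1^s (2 ∑_{l ≥ s} ρ_l |x_l|² - ρ_s |x_s|²)`.
-/

section FiniteSums

lemma sum_Icc_add_right {M : Type*} [AddCommMonoid M] (f : ℕ → M) (p q j : ℕ) :
    ∑ k ∈ Icc (p + j) (q + j), f k = ∑ k ∈ Icc p q, f (k + j) := by
  rw [← map_add_right_Icc, sum_map]
  rfl

lemma sum_range_two_mul {M : Type*} [AddCommMonoid M] (f : ℕ → M) (N : ℕ) :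
    ∑ i ∈ range (2 * N), f i = ∑ r ∈ range N, (f (2 * r) + f (2 * r + 1)) := by
  induction N with
  | zero => rfl
  | succ N ih => rw [mul_add_one, sum_range_succ, sum_range_succ, ih, sum_range_succ, add_assoc]

lemma sum_Icc_neg_eq_sum_antidiagonal {M : Type*} [AddCommMonoid M] (f : ℕ → ℕ → M) (r : ℕ) :
    ∑ p ∈ Icc (-(r : ℤ)) r, f (r + p).toNat (r - p).toNat =
      ∑ x ∈ antidiagonal (2 * r), f x.1 x.2 := by
  refine sum_bij' (fun p _ => (((r : ℤ) + p).toNat, ((r : ℤ) - p).toNat))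
    (fun x _ => (x.1 : ℤ) - r) ?_ ?_ ?_ ?_ ?_ <;>
  simp only [mem_Icc, HasAntidiagonal.mem_antidiagonal, Prod.forall, Prod.mk.injEq] <;> grind

lemma sum_Icc_ite_eq_left_mul {R : Type*} [CommRing R] {l n : ℕ} (hl : l ≤ n) (f : ℕ → R) :
    ∑ k ∈ Icc l n, (if l = k then 1 else 2) * f k = 2 * ∑ k ∈ Icc l n, f k - f l := by
  rw [← add_sum_Ioc_eq_sum_Icc hl, ← add_sum_Ioc_eq_sum_Icc hl, if_pos rfl]
  have off_diagonal : ∀ k ∈ Ioc l n, (if l = k then 1 else 2) * f k = 2 * f k := fun k hk => by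
    rw [if_neg (mem_Ioc.1 hk).1.ne]
  rw [sum_congr rfl off_diagonal, ← mul_sum]
  ring

end FiniteSums

section Data

variable {a : ℕ → ℝ} (η : ℕ → ℝ)

lemma shift_shift (f : ℕ → ℝ) (j k : ℕ) : shift (shift f j) k = shift f (k + j) :=
  funext fun i => congrArg f (add_assoc i k j)

lemma shift_ne_zero (ha : ∀ k, 1 ≤ k → a k ≠ 0) (j k : ℕ) (hk : 1 ≤ k) : shift a j k ≠ 0 :=
  ha (k + j) (by omega)

lemma rho_zero (a : ℕ → ℝ) : rho a 0 = 1 := by simp [rho]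

lemma rho_succ (a : ℕ → ℝ) (n : ℕ) : rho a (n + 1) = rho a n * a (n + 1) :=
  prod_Icc_succ_top (by omega) a

lemma rho_ne_zero (ha : ∀ k, 1 ≤ k → a k ≠ 0) (n : ℕ) : rho a n ≠ 0 :=
  prod_ne_zero_iff.2 fun k hk => ha k (mem_Icc.1 hk).1

lemma rho_add (a : ℕ → ℝ) (n j : ℕ) : rho a (n + j) = rho a j * rho (shift a j) n := by
  induction n with
  | zero => simp [rho_zero]
  | succ n ih =>
    rw [Nat.add_right_comm, rho_succ, rho_succ, ih, mul_assoc, shift, Nat.add_right_comm]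

lemma Rkl_shift (ha : ∀ k, 1 ≤ k → a k ≠ 0) (j p q : ℕ) :
    Rkl (shift a j) (shift η j) p q = Rkl a η (p + j) (q + j) := by
  rw [Rkl, Rkl, sum_Icc_add_right]
  refine sum_congr rfl fun s _ => ?_
  rw [rho_add, rho_add, mul_div_mul_left _ _ (rho_ne_zero ha j), shift]

lemma Rkl_succ (ha : ∀ k, 1 ≤ k → a k ≠ 0) {k l : ℕ} (hkl : k ≤ l + 1) :
    Rkl a η k (l + 1) = a (l + 1) * Rkl a η k l + η (l + 1) := by
  rw [Rkl, Rkl, sum_Icc_succ_top hkl, div_self (rho_ne_zero ha _), mul_one, mul_sum]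
  congr 1
  refine sum_congr rfl fun s _ => ?_
  rw [rho_succ]
  ring

/-- Summation by parts: `η_s / ρ_s` is the increment of `R_1^s / ρ_s`. -/
lemma sum_eta_mul_rho_mul (ha : ∀ k, 1 ≤ k → a k ≠ 0) (f : ℕ → ℝ) (m : ℕ) :
    ∑ s ∈ Icc 1 m, η s * rho a s * f s =
      ∑ s ∈ Icc 1 m, Rkl a η 1 s * rho a s * (f s - a (s + 1) ^ 2 * f (s + 1)) +
        Rkl a η 1 m * rho a m * a (m + 1) ^ 2 * f (m + 1) := by
  induction m with
  | zero => simp [Rkl]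
  | succ m ih =>
    rw [sum_Icc_succ_top (by omega), sum_Icc_succ_top (by omega), ih,
      Rkl_succ η ha (by omega), rho_succ]
    ring

end Data

section Delta

/-- The index set of `Delta a η r n`: the tuples `1 ≤ k₁ < ⋯ < k_r ≤ n`. -/
noncomputable def increasingTuples (r n : ℕ) : Finset (Fin r → ℕ) :=
  (Fintype.piFinset fun _ : Fin r => Icc 1 n).filter (fun k => ∀ i j : Fin r, i < j → k i < k j)

/-- The summand `R_1^{k₁} R_{k₁+1}^{k₂} ⋯ R_{k_{r-1}+1}^{k_r}` of `Delta a η r n`; the `if` supplies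
the convention `k₀ = 0`. -/
noncomputable def chainProd (a η : ℕ → ℝ) {r : ℕ} (k : Fin r → ℕ) : ℝ :=
  ∏ i : Fin r, Rkl a η (if (i : ℕ) = 0 then 1 else
    k ⟨(i : ℕ) - 1, Nat.lt_of_le_of_lt (Nat.sub_le _ _) i.isLt⟩ + 1) (k i)

lemma Delta_eq_sum_chainProd (a η : ℕ → ℝ) (r n : ℕ) :
    Delta a η r n = ∑ k ∈ increasingTuples r n, chainProd a η k :=
  rfl

lemma mem_increasingTuples {r n : ℕ} {k : Fin r → ℕ} :
    k ∈ increasingTuples r n ↔ (∀ i, k i ∈ Icc 1 n) ∧ StrictMono k := by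
  rw [increasingTuples, mem_filter, Fintype.mem_piFinset]
  rfl

lemma cons_add_mem_increasingTuples {r n k₀ : ℕ} {k : Fin r → ℕ} :
    (Fin.cons k₀ (fun i => k i + k₀) : Fin (r + 1) → ℕ) ∈ increasingTuples (r + 1) n ↔
      k₀ ∈ Icc 1 n ∧ k ∈ increasingTuples r (n - k₀) := by
  have strictMono_add : StrictMono (fun i => k i + k₀) ↔ StrictMono k := by simp [StrictMono]
  simp only [mem_increasingTuples, Fin.forall_fin_succ, Fin.cons_zero, Fin.cons_succ,
    Fin.strictMono_cons, strictMono_add, mem_Icc]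
  constructor
  · rintro ⟨⟨h₀, hk⟩, hlt, hmono⟩
    exact ⟨h₀, fun i => by have := hk i; have := hlt i; omega, hmono⟩
  · rintro ⟨h₀, hk, hmono⟩
    exact ⟨⟨h₀, fun i => by have := hk i; omega⟩, fun i => by have := hk i; omega, hmono⟩

lemma cons_sub_add_cancel {r n : ℕ} {k : Fin (r + 1) → ℕ} (hk : k ∈ increasingTuples (r + 1) n) :
    (Fin.cons (k 0) (fun i => k i.succ - k 0 + k 0) : Fin (r + 1) → ℕ) = k := by
  funext i
  cases i using Fin.cases with
  | zero => rfl
  | succ i => exact Nat.sub_add_cancel ((mem_increasingTuples.1 hk).2.monotone (Fin.zero_le _))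

variable {a : ℕ → ℝ} (η : ℕ → ℝ)

lemma chainProd_cons_add (ha : ∀ k, 1 ≤ k → a k ≠ 0) (k₀ : ℕ) {r : ℕ} (k : Fin r → ℕ) :
    chainProd a η (Fin.cons k₀ fun i => k i + k₀ : Fin (r + 1) → ℕ) =
      Rkl a η 1 k₀ * chainProd (shift a k₀) (shift η k₀) k := by
  rw [chainProd, Fin.prod_univ_succ]
  congr 1
  refine prod_congr rfl fun i _ => ?_
  rw [Rkl_shift η ha]
  congr 1
  obtain ⟨_ | i, hi⟩ := i
  · exact Nat.add_comm k₀ 1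
  · exact Nat.add_right_comm _ k₀ 1

lemma Delta_zero (a η : ℕ → ℝ) (n : ℕ) : Delta a η 0 n = 1 := by simp [Delta]

lemma Delta_eq_zero_of_lt (a η : ℕ → ℝ) {r n : ℕ} (hnr : n < r) : Delta a η r n = 0 := by
  rw [Delta_eq_sum_chainProd]
  refine sum_eq_zero fun k hk => absurd hnr (not_lt.2 ?_)
  obtain ⟨hmem, hmono⟩ := mem_increasingTuples.1 hk
  simpa using card_le_card_of_injOn (s := univ) k (fun i _ => hmem i) hmono.injective.injOn

lemma Delta_succ (ha : ∀ k, 1 ≤ k → a k ≠ 0) (r n : ℕ) :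
    Delta a η (r + 1) n =
      ∑ k ∈ Icc 1 n, Rkl a η 1 k * Delta (shift a k) (shift η k) r (n - k) := by
  simp only [Delta_eq_sum_chainProd, mul_sum, sum_sigma']
  symm
  refine sum_bij' (fun p _ => (Fin.cons p.1 fun i => p.2 i + p.1 : Fin (r + 1) → ℕ))
    (fun k _ => ⟨k 0, fun i => k i.succ - k 0⟩) ?_ ?_ ?_ ?_ ?_
  · exact fun p hp => cons_add_mem_increasingTuples.2 (mem_sigma.1 hp)
  · intro k hk
    exact mem_sigma.2 (cons_add_mem_increasingTuples.1 ((cons_sub_add_cancel hk).symm ▸ hk))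
  · simp
  · exact fun k hk => cons_sub_add_cancel hk
  · exact fun p _ => (chainProd_cons_add η ha p.1 p.2).symm

end Delta

section DeltaPoly

open Polynomial

/-- The generating polynomial `∑_r Δ_r^n X^r`. -/
noncomputable def deltaPoly (a η : ℕ → ℝ) (n : ℕ) : ℝ[X] :=
  ∑ r ∈ range (n + 1), monomial r (Delta a η r n)

lemma coeff_deltaPoly (a η : ℕ → ℝ) (n r : ℕ) : (deltaPoly a η n).coeff r = Delta a η r n := by
  simp only [deltaPoly, finsetSum_coeff, coeff_monomial, sum_ite_eq', mem_range]
  split_ifs with hr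
  · rfl
  · exact (Delta_eq_zero_of_lt a η (by omega)).symm

lemma natDegree_deltaPoly_le (a η : ℕ → ℝ) (n : ℕ) : (deltaPoly a η n).natDegree ≤ n :=
  natDegree_le_iff_coeff_eq_zero.2 fun r hr => by
    rw [coeff_deltaPoly, Delta_eq_zero_of_lt a η hr]

lemma deltaPoly_eq {a : ℕ → ℝ} (η : ℕ → ℝ) (ha : ∀ k, 1 ≤ k → a k ≠ 0) (n : ℕ) :
    deltaPoly a η n =
      1 + X * ∑ k ∈ Icc 1 n, C (Rkl a η 1 k) * deltaPoly (shift a k) (shift η k) (n - k) := by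
  ext r
  cases r with
  | zero => simp [coeff_deltaPoly, Delta_zero]
  | succ r => simp [coeff_deltaPoly, Delta_succ η ha, coeff_one]

lemma deltaPoly_shift_eq {a : ℕ → ℝ} (η : ℕ → ℝ) (ha : ∀ k, 1 ≤ k → a k ≠ 0) {l n : ℕ}
    (hl : l ≤ n) :
    deltaPoly (shift a l) (shift η l) (n - l) =
      1 + X * ∑ k ∈ Icc (l + 1) n,
        C (Rkl a η (l + 1) k) * deltaPoly (shift a k) (shift η k) (n - k) := by
  obtain ⟨m, rfl⟩ := Nat.exists_eq_add_of_le' hl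
  simp only [deltaPoly_eq _ (shift_ne_zero ha l), shift_shift, Rkl_shift η ha, add_comm l 1,
    sum_Icc_add_right, Nat.add_sub_cancel, Nat.add_sub_add_right]

lemma re_aeval_I_mul {P : ℝ[X]} {N : ℕ} (hP : P.natDegree < 2 * N) (t : ℝ) :
    (aeval (Complex.I * t) P).re = ∑ r ∈ range N, t ^ (2 * r) * ((-1) ^ r * P.coeff (2 * r)) := by
  have I_mul_pow (r : ℕ) : (Complex.I * t) ^ (2 * r) = ((-1) ^ r * t ^ (2 * r) : ℝ) := by
    rw [mul_pow, pow_mul, Complex.I_sq]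
    push_cast
    rfl
  rw [aeval_eq_sum_range' hP, Complex.re_sum, sum_range_two_mul]
  refine sum_congr rfl fun r _ => ?_
  rw [pow_succ, I_mul_pow, Complex.real_smul, Complex.real_smul, Complex.re_ofReal_mul,
    Complex.re_ofReal_mul, Complex.re_ofReal_mul, Complex.ofReal_re, Complex.re_mul_ofReal,
    Complex.I_re]
  ring

lemma normSq_aeval_neg_I_mul {P : ℝ[X]} {N : ℕ} (hP : P.natDegree < N) (t : ℝ) :
    Complex.normSq (aeval (-(Complex.I * t)) P) =
      ∑ r ∈ range N, t ^ (2 * r) * ((-1) ^ r * (P.comp (C (-1) * X) * P).coeff (2 * r)) := by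
  have hdeg : (P.comp (C (-1) * X) * P).natDegree < 2 * N := by
    have := natDegree_mul_le (p := P.comp (C (-1) * X)) (q := P)
    have : (C (-1) * X : ℝ[X]).natDegree = 1 := natDegree_C_mul_X _ (by norm_num)
    grind [natDegree_comp]
  have conj_aeval : (starRingEnd ℂ) (aeval (-(Complex.I * t)) P) = aeval (Complex.I * t) P := by
    simp [← aeval_conj]
  have aeval_comp_neg : aeval (Complex.I * t) (P.comp (C (-1) * X)) =
      aeval (-(Complex.I * t)) P := by simp [aeval_comp]
  rw [← re_aeval_I_mul hdeg, map_mul, aeval_comp_neg, ← conj_aeval, Complex.mul_conj,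
    Complex.ofReal_re]

lemma Kr_eq_coeff (a η : ℕ → ℝ) (r n : ℕ) :
    Kr a η r n =
      (-1) ^ r * ((deltaPoly a η n).comp (C (-1) * X) * deltaPoly a η n).coeff (2 * r) := by
  have neg_one_zpow {p : ℤ} (hp : p ∈ Icc (-(r : ℤ)) r) :
      (-1 : ℝ) ^ p = (-1) ^ r * (-1) ^ (r + p).toNat := by
    rw [← pow_add, ← zpow_natCast]
    have : ((r + (r + p).toNat : ℕ) : ℤ) = p + 2 * r := by grind
    rw [this, zpow_add₀ (by norm_num), zpow_mul]
    simp
  simp only [coeff_mul, comp_C_mul_X_coeff, coeff_deltaPoly]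
  rw [← sum_Icc_neg_eq_sum_antidiagonal fun i j => Delta a η i n * (-1) ^ i * Delta a η j n,
    Kr, mul_sum]
  refine sum_congr rfl fun p hp => ?_
  rw [neg_one_zpow hp]
  ring

lemma normSq_aeval_deltaPoly (a η : ℕ → ℝ) (t : ℝ) {n N : ℕ} (hn : n < N) :
    Complex.normSq (aeval (-(Complex.I * t)) (deltaPoly a η n)) =
      ∑ r ∈ range N, t ^ (2 * r) * Kr a η r n := by
  simp only [Kr_eq_coeff, normSq_aeval_neg_I_mul ((natDegree_deltaPoly_le a η n).trans_lt hn)]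

end DeltaPoly

section Tail

open Polynomial

/-- The coefficient `b_k - i t η_k` of the recurrence satisfied by `A` and `B`. -/
noncomputable def recCoeff (a η : ℕ → ℝ) (t : ℝ) (k : ℕ) : ℂ :=
  ((1 + a k : ℝ) : ℂ) - Complex.I * (t : ℂ) * ((η k : ℝ) : ℂ)

/-- The tail denominator `θ^l B_{n-l}`, computed downwards in `l` from the values `1` at `l = n` and
`0` at `l = n + 1` by expanding along the first index instead of the last. -/
noncomputable def tailDenom (a η : ℕ → ℝ) (t : ℝ) (n l : ℕ) : ℂ :=
  if l < n then
    recCoeff a η t (l + 1) * tailDenom a η t n (l + 1) - a (l + 2) * tailDenom a η t n (l + 2)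
  else if l = n then 1 else 0
termination_by n + 1 - l

/-- `θ^l (B - A)_{n-l}`, since `θ^l A_{n-l} = a_{l+1} θ^{l+1} B_{n-l-1}`. -/
noncomputable def tailDiff (a η : ℕ → ℝ) (t : ℝ) (n l : ℕ) : ℂ :=
  tailDenom a η t n l - a (l + 1) * tailDenom a η t n (l + 1)

variable (a η : ℕ → ℝ) (t : ℝ) (n : ℕ)

lemma tailDenom_of_lt {l : ℕ} (hl : l < n) :
    tailDenom a η t n l =
      recCoeff a η t (l + 1) * tailDenom a η t n (l + 1) -
        a (l + 2) * tailDenom a η t n (l + 2) := by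
  rw [tailDenom, if_pos hl]

lemma tailDenom_self : tailDenom a η t n n = 1 := by
  rw [tailDenom, if_neg (lt_irrefl n), if_pos rfl]

lemma tailDenom_succ_self : tailDenom a η t n (n + 1) = 0 := by
  rw [tailDenom, if_neg (by omega), if_neg (by omega)]

lemma tailDiff_self : tailDiff a η t n n = 1 := by
  rw [tailDiff, tailDenom_self, tailDenom_succ_self, mul_zero, sub_zero]

lemma tailDiff_of_lt {l : ℕ} (hl : l < n) :
    tailDiff a η t n l =
      tailDiff a η t n (l + 1) - Complex.I * t * (η (l + 1) * tailDenom a η t n (l + 1)) := by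
  rw [tailDiff, tailDiff, tailDenom_of_lt a η t n hl, recCoeff]
  push_cast
  ring

lemma tailDenom_eq_tailDiff_add (l : ℕ) :
    tailDenom a η t n l = tailDiff a η t n l + a (l + 1) * tailDenom a η t n (l + 1) := by
  rw [tailDiff, sub_add_cancel]

/-- The Casoratian `u_m y_m - a_{m+1} u_{m-1} y_{m+1}` of `u` and `y = tailDenom` is constant
in `m`. -/
lemma eq_casoratian (u : ℤ → ℂ) {m : ℕ} (hm : m ≤ n)
    (hu : ∀ k : ℕ, m + 1 ≤ k → u k = recCoeff a η t k * u ((k : ℤ) - 1) - a k * u ((k : ℤ) - 2)) :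
    u n = u m * tailDenom a η t n m - a (m + 1) * u ((m : ℤ) - 1) * tailDenom a η t n (m + 1) := by
  induction hm using Nat.decreasingInduction with
  | self => rw [tailDenom_self, tailDenom_succ_self, mul_one, mul_zero, sub_zero]
  | of_succ m hm ih =>
    have hstep := hu (m + 1) le_rfl
    rw [ih fun k hk => hu k (by omega), tailDenom_of_lt a η t n hm, hstep]
    push_cast
    ring_nf

lemma rho_mul_tailDenom {l : ℕ} (hl : l ≤ n + 1) :
    rho a l * tailDenom a η t n l = ∑ k ∈ Icc l n, rho a k * tailDiff a η t n k := by
  induction hl using Nat.decreasingInduction with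
  | self => simp [tailDenom_succ_self]
  | of_succ l hl ih =>
    rw [← add_sum_Ioc_eq_sum_Icc (Nat.lt_succ_iff.1 hl), ← Icc_add_one_left_eq_Ioc, ← ih,
      tailDenom_eq_tailDiff_add, rho_succ]
    push_cast
    ring

lemma tailDiff_eq_one_sub_sum_tailDenom {l : ℕ} (hl : l ≤ n) :
    tailDiff a η t n l =
      1 - Complex.I * t * ∑ s ∈ Icc (l + 1) n, η s * tailDenom a η t n s := by
  induction hl using Nat.decreasingInduction with
  | self => simp [tailDiff_self]
  | of_succ l hl ih =>
    rw [tailDiff_of_lt a η t n hl, ih, ← add_sum_Ioc_eq_sum_Icc (Nat.succ_le_of_lt hl),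
      ← Icc_add_one_left_eq_Ioc]
    ring

lemma re_tailDiff_mul_conj_tailDenom {l : ℕ} (hl : l < n) :
    (tailDiff a η t n l * star (tailDenom a η t n l)).re =
      Complex.normSq (tailDiff a η t n l) +
        a (l + 1) * (tailDiff a η t n (l + 1) * star (tailDenom a η t n (l + 1))).re := by
  rw [tailDenom_eq_tailDiff_add a η t n l, tailDiff_of_lt a η t n hl]
  simp only [Complex.normSq_apply, Complex.star_def, Complex.conj_re, Complex.conj_im,
    Complex.mul_re, Complex.mul_im, Complex.add_re, Complex.add_im, Complex.sub_re, Complex.sub_im,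
    Complex.I_re, Complex.I_im, Complex.ofReal_re, Complex.ofReal_im]
  ring

lemma im_tailDenom_mul_conj_tailDiff {l : ℕ} (hl : l < n) :
    (tailDenom a η t n (l + 1) * star (tailDiff a η t n l)).im =
      t * (η (l + 1) * Complex.normSq (tailDenom a η t n (l + 1))) +
        a (l + 2) * (tailDenom a η t n (l + 2) * star (tailDiff a η t n (l + 1))).im := by
  rw [tailDiff_of_lt a η t n hl, tailDenom_eq_tailDiff_add a η t n (l + 1)]
  simp only [Complex.normSq_apply, Complex.star_def, Complex.conj_re, Complex.conj_im,
    Complex.mul_re, Complex.mul_im, Complex.add_re, Complex.add_im, Complex.sub_re, Complex.sub_im,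
    Complex.I_re, Complex.I_im, Complex.ofReal_re, Complex.ofReal_im]
  ring

lemma rho_mul_re_tailDiff_mul_conj_tailDenom {l : ℕ} (hl : l ≤ n) :
    rho a l * (tailDiff a η t n l * star (tailDenom a η t n l)).re =
      ∑ k ∈ Icc l n, rho a k * Complex.normSq (tailDiff a η t n k) := by
  induction hl using Nat.decreasingInduction with
  | self => simp [tailDiff_self, tailDenom_self]
  | of_succ l hl ih =>
    rw [← add_sum_Ioc_eq_sum_Icc hl.le, ← Icc_add_one_left_eq_Ioc, ← ih, rho_succ,
      re_tailDiff_mul_conj_tailDenom a η t n hl]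
    ring

lemma rho_mul_im_tailDenom_mul_conj_tailDiff {l : ℕ} (hl : l ≤ n) :
    rho a (l + 1) * (tailDenom a η t n (l + 1) * star (tailDiff a η t n l)).im =
      t * ∑ s ∈ Icc (l + 1) n, η s * rho a s * Complex.normSq (tailDenom a η t n s) := by
  induction hl using Nat.decreasingInduction with
  | self => simp [tailDenom_succ_self]
  | of_succ l hl ih =>
    rw [← add_sum_Ioc_eq_sum_Icc (Nat.succ_le_of_lt hl), ← Icc_add_one_left_eq_Ioc, mul_add, ← ih,
      rho_succ a (l + 1), im_tailDenom_mul_conj_tailDiff a η t n hl]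
    ring

lemma normSq_tailDenom_sub (l : ℕ) :
    Complex.normSq (tailDenom a η t n l) -
        a (l + 1) ^ 2 * Complex.normSq (tailDenom a η t n (l + 1)) =
      2 * (tailDiff a η t n l * star (tailDenom a η t n l)).re -
        Complex.normSq (tailDiff a η t n l) := by
  simp only [tailDiff, Complex.normSq_apply, Complex.star_def, Complex.conj_re, Complex.conj_im,
    Complex.mul_re, Complex.mul_im, Complex.sub_re, Complex.sub_im, Complex.ofReal_re,
    Complex.ofReal_im]
  ring

variable {a}

lemma tailDiff_eq_one_sub_sum_tailDiff (ha : ∀ k, 1 ≤ k → a k ≠ 0) {l : ℕ} (hl : l ≤ n) :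
    tailDiff a η t n l =
      1 - Complex.I * t * ∑ k ∈ Icc (l + 1) n, Rkl a η (l + 1) k * tailDiff a η t n k := by
  have tailDenom_eq {s : ℕ} (hs : s ≤ n) :
      tailDenom a η t n s = ∑ k ∈ Icc s n, (rho a k / rho a s : ℝ) * tailDiff a η t n k := by
    have hρ : (rho a s : ℂ) ≠ 0 := mod_cast rho_ne_zero ha s
    rw [← mul_right_inj' hρ, rho_mul_tailDenom a η t n (by omega), mul_sum]
    refine sum_congr rfl fun k _ => ?_
    push_cast
    field_simp
  have sum_eta_mul_tailDenom : ∑ s ∈ Icc (l + 1) n, (η s : ℂ) * tailDenom a η t n s =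
      ∑ k ∈ Icc (l + 1) n, Rkl a η (l + 1) k * tailDiff a η t n k := calc
    _ = ∑ s ∈ Icc (l + 1) n, ∑ k ∈ Icc s n,
          (η s * (rho a k / rho a s) : ℝ) * tailDiff a η t n k := by
      refine sum_congr rfl fun s hs => ?_
      rw [tailDenom_eq (mem_Icc.1 hs).2, mul_sum]
      exact sum_congr rfl fun k _ => by rw [Complex.ofReal_mul, mul_assoc]
    _ = ∑ k ∈ Icc (l + 1) n, ∑ s ∈ Icc (l + 1) k,
          (η s * (rho a k / rho a s) : ℝ) * tailDiff a η t n k :=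
      sum_comm' fun s k => by grind
    _ = _ := sum_congr rfl fun k _ => by rw [Rkl, Complex.ofReal_sum, sum_mul]
  rw [tailDiff_eq_one_sub_sum_tailDenom a η t n hl, sum_eta_mul_tailDenom]

lemma tailDiff_eq_aeval_deltaPoly (ha : ∀ k, 1 ≤ k → a k ≠ 0) {l : ℕ} (hl : l ≤ n) :
    tailDiff a η t n l =
      aeval (-(Complex.I * t)) (deltaPoly (shift a l) (shift η l) (n - l)) := by
  induction hm : n - l using Nat.strong_induction_on generalizing l with
  | _ m ih =>
    subst hm
    have tail : ∀ k ∈ Icc (l + 1) n, tailDiff a η t n k =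
        aeval (-(Complex.I * t)) (deltaPoly (shift a k) (shift η k) (n - k)) := fun k hk =>
      ih (n - k) (by grind) (mem_Icc.1 hk).2 rfl
    rw [tailDiff_eq_one_sub_sum_tailDiff η t n ha hl, deltaPoly_shift_eq η ha hl,
      sum_congr rfl fun k hk => by rw [tail k hk]]
    simp [sub_eq_add_neg]

lemma normSq_tailDiff (ha : ∀ k, 1 ≤ k → a k ≠ 0) {l N : ℕ} (hl : l ≤ n) (hN : n - l < N) :
    Complex.normSq (tailDiff a η t n l) =
      ∑ r ∈ range N, t ^ (2 * r) * Kr (shift a l) (shift η l) r (n - l) := by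
  rw [tailDiff_eq_aeval_deltaPoly η t n ha hl, normSq_aeval_deltaPoly _ _ t hN]

lemma sum_eta_mul_rho_mul_normSq_tailDenom (ha : ∀ k, 1 ≤ k → a k ≠ 0) :
    ∑ s ∈ Icc 1 n, η s * rho a s * Complex.normSq (tailDenom a η t n s) =
      ∑ l ∈ Icc 1 n, ∑ k ∈ Icc 1 l, Rkl a η 1 k * (if k = l then (1 : ℝ) else 2) * rho a l *
        Complex.normSq (tailDiff a η t n l) := by
  set x := tailDiff a η t n with hx
  set y := tailDenom a η t n with hy
  calc ∑ s ∈ Icc 1 n, η s * rho a s * Complex.normSq (y s)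
    _ = ∑ k ∈ Icc 1 n, Rkl a η 1 k * rho a k *
          (2 * (x k * star (y k)).re - Complex.normSq (x k)) := by
      rw [sum_eta_mul_rho_mul η ha, hy, tailDenom_succ_self, map_zero, mul_zero, add_zero]
      simp only [normSq_tailDenom_sub, hx]
    _ = ∑ k ∈ Icc 1 n, Rkl a η 1 k *
          ∑ l ∈ Icc k n, (if k = l then 1 else 2) * (rho a l * Complex.normSq (x l)) := by
      refine sum_congr rfl fun k hk => ?_
      have hkn := (mem_Icc.1 hk).2
      rw [sum_Icc_ite_eq_left_mul hkn, ← rho_mul_re_tailDiff_mul_conj_tailDenom a η t n hkn]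
      ring
    _ = ∑ l ∈ Icc 1 n, ∑ k ∈ Icc 1 l, Rkl a η 1 k *
          ((if k = l then 1 else 2) * (rho a l * Complex.normSq (x l))) := by
      simp only [mul_sum]
      exact sum_comm' fun k l => by grind
    _ = _ := by simp only [mul_assoc]

lemma im_mul_conj_tailDenom (ha : ∀ k, 1 ≤ k → a k ≠ 0) :
    (a 1 * tailDenom a η t n 1 * star (tailDenom a η t n 0)).im =
      t * ∑ l ∈ Icc 1 n, ∑ k ∈ Icc 1 l, Rkl a η 1 k * (if k = l then (1 : ℝ) else 2) * rho a l *
        Complex.normSq (tailDiff a η t n l) := by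
  have im_eq : (a 1 * tailDenom a η t n 1 * star (tailDenom a η t n 0)).im =
      rho a 1 * (tailDenom a η t n 1 * star (tailDiff a η t n 0)).im := by
    rw [tailDenom_eq_tailDiff_add a η t n 0, rho_succ, rho_zero, one_mul, mul_assoc,
      Complex.im_ofReal_mul]
    simp only [zero_add, Complex.star_def, Complex.conj_re, Complex.conj_im, Complex.mul_re,
      Complex.mul_im, Complex.add_re, Complex.add_im, Complex.ofReal_re, Complex.ofReal_im]
    ring
  rw [im_eq, rho_mul_im_tailDenom_mul_conj_tailDiff a η t n n.zero_le, zero_add,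
    sum_eta_mul_rho_mul_normSq_tailDenom η t n ha]

end Tail

theorem stmt_17_general
    (a η : ℕ → ℝ) (ha : ∀ k : ℕ, 1 ≤ k → a k ≠ 0) (t : ℝ)
    (B : ℤ → ℂ) (hBm : B (-1) = 0) (hB0 : B 0 = 1)
    (hB : ∀ n : ℕ, 1 ≤ n →
      B (n : ℤ) = (((1 + a n : ℝ) : ℂ) - Complex.I * (t : ℂ) * ((η n : ℝ) : ℂ)) * B ((n : ℤ) - 1)
        - ((a n : ℝ) : ℂ) * B ((n : ℤ) - 2))
    (A : ℤ → ℂ) (hA0 : A 0 = 0) (hA1 : A 1 = ((a 1 : ℝ) : ℂ))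
    (hA : ∀ n : ℕ, 2 ≤ n →
      A (n : ℤ) = (((1 + a n : ℝ) : ℂ) - Complex.I * (t : ℂ) * ((η n : ℝ) : ℂ)) * A ((n : ℤ) - 1)
        - ((a n : ℝ) : ℂ) * A ((n : ℤ) - 2)) :
    ∀ n : ℕ, 1 ≤ n →
      (A (n : ℤ) * star (B (n : ℤ))).im =
        ∑ r ∈ Finset.range n, t ^ (2 * r + 1) *
          ∑ l ∈ Finset.Icc 1 n, ∑ k ∈ Finset.Icc 1 l,
            Rkl a η 1 k * (if k = l then (1 : ℝ) else 2) * rho a l *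
              Kr (shift a l) (shift η l) r (n - l) := by
  intro n hn
  have hBn : B n = tailDenom a η t n 0 := by
    simpa [hB0, hBm] using eq_casoratian a η t n B n.zero_le hB
  have hAn : A n = a 1 * tailDenom a η t n 1 := by
    simpa [hA0, hA1] using eq_casoratian a η t n A hn hA
  rw [hAn, hBn, im_mul_conj_tailDenom η t n ha]
  simp only [mul_sum]
  rw [sum_comm]
  refine sum_congr rfl fun l hl => ?_
  rw [sum_comm]
  refine sum_congr rfl fun k _ => ?_
  rw [normSq_tailDiff η t n ha (N := n) (by grind) (by grind), mul_sum, mul_sum]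
  exact sum_congr rfl fun r _ => by ring

/-- `Im(A n · conj (B n)) = ∑_{r=0}^{n-1} t^{2r+1} N_r(n)` with
`N_r(n) = ∑_{1≤k≤l≤n} R_1^k 2^{(k,l)} ρ l · θ^l K_r(n-l)`. -/
theorem stmt_17
    (a η : ℕ → ℝ) (ha : ∀ k : ℕ, 1 ≤ k → 0 < a k) (t : ℝ)
    (B : ℤ → ℂ) (hBm : B (-1) = 0) (hB0 : B 0 = 1)
    (hB : ∀ n : ℕ, 1 ≤ n →
      B (n : ℤ) = (((1 + a n : ℝ) : ℂ) - Complex.I * (t : ℂ) * ((η n : ℝ) : ℂ)) * B ((n : ℤ) - 1)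
        - ((a n : ℝ) : ℂ) * B ((n : ℤ) - 2))
    (A : ℤ → ℂ) (hA0 : A 0 = 0) (hA1 : A 1 = ((a 1 : ℝ) : ℂ))
    (hA : ∀ n : ℕ, 2 ≤ n →
      A (n : ℤ) = (((1 + a n : ℝ) : ℂ) - Complex.I * (t : ℂ) * ((η n : ℝ) : ℂ)) * A ((n : ℤ) - 1)
        - ((a n : ℝ) : ℂ) * A ((n : ℤ) - 2)) :
    ∀ n : ℕ, 1 ≤ n →
      (A (n : ℤ) * star (B (n : ℤ))).im =
        ∑ r ∈ Finset.range n, t ^ (2 * r + 1) *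
          ∑ l ∈ Finset.Icc 1 n, ∑ k ∈ Finset.Icc 1 l,
            Rkl a η 1 k * (if k = l then (1 : ℝ) else 2) * rho a l *
              Kr (shift a l) (shift η l) r (n - l) :=
  stmt_17_general a η (fun k hk => (ha k hk).ne') t B hBm hB0 hB A hA0 hA1 hA
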